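/- arXiv:2410.22169 — 5 statements merged into one kernel-verified Lean document; each statement's English description precedes it below -/
import Mathlib

section
/- Suppose u* ∈ ℝⁿ satisfies AᵀAu* = Aᵀb and Lu* = g. If γ > 0 and u_γ ∈ ℝⁿ minimizes J_γ over ℝⁿ, then Au_γ = Au*. In particular the data reconstructed from any stabilized-regularized minimizer coincides with Au* for every positive regularization parameter γ, whatever seminorm N is used in the regularization term. -/
open scoped Matrix RealInnerProductSpace

/-- Multiplication of a Euclidean vector by a real matrix, landing in Euclidean space
(so that `‖·‖` and `⟪·,·⟫` denote the Euclidean norm and inner product). -/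
noncomputable def mulE {m n : ℕ} (A : Matrix (Fin m) (Fin n) ℝ)
    (v : EuclideanSpace ℝ (Fin n)) : EuclideanSpace ℝ (Fin m) :=
  Matrix.toEuclideanLin A v

/-- The stabilized-regularized functional
`J_γ(v) = ½‖Av − b‖² − ½‖b‖² + (γ/2)‖AᵀAv − Aᵀb‖² + (γ/2) N(Lv − g)²`,
where `N` is a seminorm on `ℝᵖ`. -/
noncomputable def Jg {m n p : ℕ} (A : Matrix (Fin m) (Fin n) ℝ)
    (b : EuclideanSpace ℝ (Fin m)) (L : Matrix (Fin p) (Fin n) ℝ)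
    (g : EuclideanSpace ℝ (Fin p)) (N : Seminorm ℝ (EuclideanSpace ℝ (Fin p)))
    (γ : ℝ) (v : EuclideanSpace ℝ (Fin n)) : ℝ :=
  (1 / 2) * ‖mulE A v - b‖ ^ 2 - (1 / 2) * ‖b‖ ^ 2
    + (γ / 2) * ‖mulE Aᵀ (mulE A v) - mulE Aᵀ b‖ ^ 2
    + (γ / 2) * (N (mulE L v - g)) ^ 2

theorem mulE_inner {m n : ℕ} (A : Matrix (Fin m) (Fin n) ℝ)
    (w : EuclideanSpace ℝ (Fin n)) (y : EuclideanSpace ℝ (Fin m)) :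
    inner ℝ (mulE A w) y = inner ℝ w (mulE Aᵀ y) := by
  have h : Aᵀ = Aᴴ := by ext i j; simp
  unfold mulE
  rw [h, Matrix.toEuclideanLin_conjTranspose_eq_adjoint, LinearMap.adjoint_inner_right]

/-- If `u⋆` satisfies `AᵀAu⋆ = Aᵀb` and `Lu⋆ = g`, `γ > 0`, and `uγ` minimizes `J_γ`
over `ℝⁿ`, then `Auγ = Au⋆`, for any seminorm `N` used in the regularization term. -/
theorem stmt3 {m n p : ℕ} (A : Matrix (Fin m) (Fin n) ℝ) (b : EuclideanSpace ℝ (Fin m))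
    (L : Matrix (Fin p) (Fin n) ℝ) (g : EuclideanSpace ℝ (Fin p))
    (N : Seminorm ℝ (EuclideanSpace ℝ (Fin p))) (γ : ℝ) (hγ : 0 < γ)
    (ustar : EuclideanSpace ℝ (Fin n))
    (hnormal : mulE Aᵀ (mulE A ustar) = mulE Aᵀ b)
    (hreg : mulE L ustar = g)
    (uγ : EuclideanSpace ℝ (Fin n))
    (hmin : ∀ v : EuclideanSpace ℝ (Fin n), Jg A b L g N γ uγ ≤ Jg A b L g N γ v) :
    mulE A uγ = mulE A ustar := by
  have h := hmin ustar
  unfold Jg at h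
  rw [hnormal, hreg] at h
  simp only [sub_self, norm_zero, map_zero] at h
  have h0 : mulE Aᵀ (mulE A ustar - b) = 0 := by
    have : mulE Aᵀ (mulE A ustar - b) = mulE Aᵀ (mulE A ustar) - mulE Aᵀ b := by
      simp only [mulE, map_sub]
    rw [this, hnormal, sub_self]
  have h1 : inner ℝ (mulE A uγ - mulE A ustar) (mulE A ustar - b) = 0 := by
    have : mulE A uγ - mulE A ustar = mulE A (uγ - ustar) := by
      simp only [mulE, map_sub]
    rw [this, mulE_inner, h0, inner_zero_right]
  have h2 := norm_add_sq_real (mulE A uγ - mulE A ustar) (mulE A ustar - b)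
  rw [h1, sub_add_sub_cancel] at h2
  have h3 : 0 ≤ (γ / 2) * ‖mulE Aᵀ (mulE A uγ) - mulE Aᵀ b‖ ^ 2 := by positivity
  have h4 : 0 ≤ (γ / 2) * (N (mulE L uγ - g)) ^ 2 := by positivity
  have h5 : ‖mulE A uγ - mulE A ustar‖ ^ 2 = 0 :=
    le_antisymm (by linarith) (sq_nonneg _)
  exact sub_eq_zero.mp (norm_eq_zero.mp (pow_eq_zero_iff (two_ne_zero) |>.mp h5))
end

section
/- Suppose u* ∈ ℝⁿ satisfies AᵀAu* = Aᵀb and Lu* = g, and suppose in addition that A has trivial kernel (full column rank, m ≥ n). If γ > 0 and u_γ ∈ ℝⁿ minimizes J_γ over ℝⁿ, then u_γ = u*; i.e., the stabilized-regularized minimizer coincides with u* for every positive regularization parameter γ. -/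
open scoped Matrix RealInnerProductSpace

/-- If `u⋆` satisfies `AᵀAu⋆ = Aᵀb` and `Lu⋆ = g`, `A` has trivial kernel
(full column rank, `m ≥ n`), `γ > 0`, and `uγ` minimizes `J_γ` over `ℝⁿ`,
then `uγ = u⋆`. -/
theorem stmt4 {m n p : ℕ} (A : Matrix (Fin m) (Fin n) ℝ) (b : EuclideanSpace ℝ (Fin m))
    (L : Matrix (Fin p) (Fin n) ℝ) (g : EuclideanSpace ℝ (Fin p))
    (N : Seminorm ℝ (EuclideanSpace ℝ (Fin p))) (γ : ℝ) (hγ : 0 < γ)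
    (hmn : n ≤ m) (hker : LinearMap.ker (Matrix.mulVecLin A) = ⊥)
    (ustar : EuclideanSpace ℝ (Fin n))
    (hnormal : mulE Aᵀ (mulE A ustar) = mulE Aᵀ b)
    (hreg : mulE L ustar = g)
    (uγ : EuclideanSpace ℝ (Fin n))
    (hmin : ∀ v : EuclideanSpace ℝ (Fin n), Jg A b L g N γ uγ ≤ Jg A b L g N γ v) :
    uγ = ustar := by
  have hadj : ∀ (x : EuclideanSpace ℝ (Fin n)) (y : EuclideanSpace ℝ (Fin m)),
      ⟪mulE A x, y⟫ = ⟪x, mulE Aᵀ y⟫ := by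
    intro x y
    have h := Matrix.toEuclideanLin_conjTranspose_eq_adjoint A
    rw [Matrix.conjTranspose_eq_transpose_of_trivial] at h
    unfold mulE
    rw [h, LinearMap.adjoint_inner_right]
  have hsub : mulE Aᵀ (mulE A ustar - b) = 0 := by
    have h : mulE Aᵀ (mulE A ustar - b) = mulE Aᵀ (mulE A ustar) - mulE Aᵀ b := by
      unfold mulE
      rw [map_sub]
    rw [h, hnormal, sub_self]
  have horth : ⟪mulE A (uγ - ustar), mulE A ustar - b⟫ = 0 := by
    rw [hadj, hsub, inner_zero_right]
  have hdec : mulE A uγ - b = mulE A (uγ - ustar) + (mulE A ustar - b) := by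
    unfold mulE
    rw [map_sub]
    abel
  have hpyth : ‖mulE A uγ - b‖ ^ 2
      = ‖mulE A (uγ - ustar)‖ ^ 2 + ‖mulE A ustar - b‖ ^ 2 := by
    rw [hdec, norm_add_sq_real, horth]
    ring
  have h := hmin ustar
  unfold Jg at h
  rw [hpyth, hnormal, hreg, sub_self, sub_self, norm_zero, map_zero] at h
  have h1 : 0 ≤ (γ / 2) * ‖mulE Aᵀ (mulE A uγ) - mulE Aᵀ b‖ ^ 2 := by positivity
  have h2 : 0 ≤ (γ / 2) * (N (mulE L uγ - g)) ^ 2 := by positivity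
  have h3 : ‖mulE A (uγ - ustar)‖ ^ 2 = 0 :=
    le_antisymm (by nlinarith) (sq_nonneg _)
  have h4 : mulE A (uγ - ustar) = 0 := by
    simpa using h3
  have h5 : Matrix.mulVecLin A (uγ - ustar).ofLp = 0 := by
    have h6 := congrArg WithLp.ofLp h4
    simpa [mulE, Matrix.mulVec_sub] using h6
  have h7 := (LinearMap.ker_eq_bot'.mp hker) _ h5
  have h8 : uγ - ustar = 0 := by
    ext i
    exact congrFun h7 i
  exact sub_eq_zero.mp h8
end

section
/- Suppose u* ∈ ℝⁿ satisfies AᵀAu* = Aᵀb and Lu* = g, let γ > 0, and let u_γ ∈ ℝⁿ minimize J_γ over ℝⁿ. Then for every integer k ∈ ℤ one has the estimate ‖Au* − Au_γ‖² ≤ γ^(−2k) (‖Au*‖² + γ(‖Aᵀb‖² + N(g)²)), obtained by comparing J_γ(u_γ) with J_γ evaluated at the competitor v_k = (1 + γ^(−k))u*. -/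
open scoped Matrix RealInnerProductSpace

/-- The transpose is the adjoint for the Euclidean inner product. -/
theorem inner_mulE {m n : ℕ} (A : Matrix (Fin m) (Fin n) ℝ) (x : EuclideanSpace ℝ (Fin n))
    (r : EuclideanSpace ℝ (Fin m)) : ⟪mulE A x, r⟫ = ⟪x, mulE Aᵀ r⟫ := by
  have h := Matrix.toEuclideanLin_conjTranspose_eq_adjoint A
  rw [Matrix.conjTranspose_eq_transpose_of_trivial] at h
  unfold mulE
  rw [h, LinearMap.adjoint_inner_right]

theorem mulE_sub {m n : ℕ} (A : Matrix (Fin m) (Fin n) ℝ) (x y : EuclideanSpace ℝ (Fin n)) :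
    mulE A (x - y) = mulE A x - mulE A y := by
  simp [mulE]

/-- If `u⋆` satisfies `AᵀAu⋆ = Aᵀb` and `Lu⋆ = g`, `γ > 0`, and `uγ` minimizes `J_γ`
over `ℝⁿ`, then for every integer `k` one has
`‖Au⋆ − Auγ‖² ≤ γ^(−2k) (‖Au⋆‖² + γ(‖Aᵀb‖² + N(g)²))`. -/
theorem stmt5 {m n p : ℕ} (A : Matrix (Fin m) (Fin n) ℝ) (b : EuclideanSpace ℝ (Fin m))
    (L : Matrix (Fin p) (Fin n) ℝ) (g : EuclideanSpace ℝ (Fin p))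
    (N : Seminorm ℝ (EuclideanSpace ℝ (Fin p))) (γ : ℝ) (hγ : 0 < γ)
    (ustar : EuclideanSpace ℝ (Fin n))
    (hnormal : mulE Aᵀ (mulE A ustar) = mulE Aᵀ b)
    (hreg : mulE L ustar = g)
    (uγ : EuclideanSpace ℝ (Fin n))
    (hmin : ∀ v : EuclideanSpace ℝ (Fin n), Jg A b L g N γ uγ ≤ Jg A b L g N γ v) :
    ∀ k : ℤ,
      ‖mulE A ustar - mulE A uγ‖ ^ 2
        ≤ γ ^ (-(2 * k)) * (‖mulE A ustar‖ ^ 2 + γ * (‖mulE Aᵀ b‖ ^ 2 + (N g) ^ 2)) := by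
  intro k
  have horth : ⟪mulE A uγ - mulE A ustar, mulE A ustar - b⟫ = 0 := by
    rw [← mulE_sub, inner_mulE, mulE_sub, hnormal, sub_self, inner_zero_right]
  have hpyth : ‖mulE A uγ - b‖ ^ 2
      = ‖mulE A ustar - mulE A uγ‖ ^ 2 + ‖mulE A ustar - b‖ ^ 2 := by
    have h := norm_add_sq_real (mulE A uγ - mulE A ustar) (mulE A ustar - b)
    rw [horth, sub_add_sub_cancel, norm_sub_rev (mulE A uγ) (mulE A ustar)] at h
    linarith
  have hJ := hmin ustar
  unfold Jg at hJ
  rw [hpyth, hnormal, hreg, sub_self, sub_self, norm_zero, map_zero] at hJ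
  have h1 : 0 ≤ (γ / 2) * ‖mulE Aᵀ (mulE A uγ) - mulE Aᵀ b‖ ^ 2 := by positivity
  have h2 : 0 ≤ (γ / 2) * (N (mulE L uγ - g)) ^ 2 := by positivity
  have h3 : 0 ≤ γ ^ (-(2 * k)) * (‖mulE A ustar‖ ^ 2 + γ * (‖mulE Aᵀ b‖ ^ 2 + (N g) ^ 2)) := by
    positivity
  linarith
end

section
/- Let γ > 0 and let u_γ and ũ_γ be solutions of the stabilized-regularized linear system ((I + γAᵀA)AᵀA + γLᵀL) u = (I + γAᵀA)Aᵀc + γLᵀg corresponding to the right-hand data c = b and c = b̃ respectively. Assume moreover that A has trivial kernel (full column rank, m ≥ n) and let λ_min > 0 be the smallest eigenvalue of the symmetric positive definite matrix AᵀA. Then ‖u_γ − ũ_γ‖ ≤ (1/√λ_min) ‖(I + γAAᵀ)(b − b̃)‖. -/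
open scoped Matrix RealInnerProductSpace

/-- If `γ > 0` and `u`, `u'` solve the stabilized-regularized linear system
`((I + γAᵀA)AᵀA + γLᵀL) u = (I + γAᵀA)Aᵀc + γLᵀg` with data `c = b`, `c = b'`
respectively, `A` has trivial kernel (full column rank, `m ≥ n`), and `λmin > 0`
is the smallest eigenvalue of `AᵀA`, then
`‖u − u'‖ ≤ (1/√λmin) ‖(I + γAAᵀ)(b − b')‖`. -/
theorem stmt11 {m n p : ℕ} (A : Matrix (Fin m) (Fin n) ℝ)
    (b b' : EuclideanSpace ℝ (Fin m))
    (L : Matrix (Fin p) (Fin n) ℝ) (g : EuclideanSpace ℝ (Fin p))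
    (γ : ℝ) (hγ : 0 < γ) (u u' : EuclideanSpace ℝ (Fin n))
    (hu : mulE ((1 + γ • (Aᵀ * A)) * (Aᵀ * A) + γ • (Lᵀ * L)) u
        = mulE (1 + γ • (Aᵀ * A)) (mulE Aᵀ b) + γ • mulE Lᵀ g)
    (hu' : mulE ((1 + γ • (Aᵀ * A)) * (Aᵀ * A) + γ • (Lᵀ * L)) u'
        = mulE (1 + γ • (Aᵀ * A)) (mulE Aᵀ b') + γ • mulE Lᵀ g)
    (hmn : n ≤ m) (hker : LinearMap.ker (Matrix.mulVecLin A) = ⊥)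
    (lmin : ℝ) (hlmin : IsLeast (spectrum ℝ (Aᵀ * A)) lmin) (hlminpos : 0 < lmin) :
    ‖u - u'‖ ≤ (1 / Real.sqrt lmin) * ‖mulE (1 + γ • (A * Aᵀ)) (b - b')‖ := by
  have hpsd : (Aᵀ * A - lmin • (1 : Matrix (Fin n) (Fin n) ℝ)).PosSemidef := by
    rw [Matrix.posSemidef_iff_isHermitian_and_spectrum_nonneg]
    refine ⟨?_, ?_⟩
    · rw [Matrix.IsHermitian, Matrix.conjTranspose_eq_transpose_of_trivial]
      simp [Matrix.transpose_mul]
    · intro x hx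
      have hx' : x + lmin ∈ spectrum ℝ (Aᵀ * A) := by
        rw [spectrum.mem_iff] at hx ⊢
        intro h
        apply hx
        convert h using 1
        rw [Algebra.algebraMap_eq_smul_one, Algebra.algebraMap_eq_smul_one, add_smul]
        abel
      have := hlmin.2 hx'
      simp only [Set.mem_setOf_eq]
      linarith
  obtain ⟨w, rfl⟩ : ∃ w, u = w + u' := ⟨u - u', by abel⟩
  obtain ⟨d, rfl⟩ : ∃ d, b = d + b' := ⟨b - b', by abel⟩
  simp only [add_sub_cancel_right]
  obtain ⟨e, he⟩ : ∃ e, e = mulE (1 + γ • (A * Aᵀ)) d := ⟨_, rfl⟩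
  rw [← he]
  -- basic facts about `mulE`
  have hinner : ∀ {k l : ℕ} (M : Matrix (Fin k) (Fin l) ℝ) (x : EuclideanSpace ℝ (Fin l))
      (y : EuclideanSpace ℝ (Fin k)), inner ℝ (mulE Mᵀ y) x = inner ℝ y (mulE M x) := by
    intro k l M x y
    have h := Matrix.toEuclideanLin_conjTranspose_eq_adjoint (𝕜 := ℝ) M
    rw [Matrix.conjTranspose_eq_transpose_of_trivial] at h
    rw [mulE, mulE, h, LinearMap.adjoint_inner_left]
  have hmul : ∀ {k l q : ℕ} (M : Matrix (Fin k) (Fin l) ℝ) (N : Matrix (Fin l) (Fin q) ℝ)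
      (x : EuclideanSpace ℝ (Fin q)), mulE (M * N) x = mulE M (mulE N x) := by
    intro k l q M N x
    simp [mulE, Matrix.toLpLin_apply, Matrix.mulVec_mulVec]
  have hadd : ∀ {k l : ℕ} (M N : Matrix (Fin k) (Fin l) ℝ) (x : EuclideanSpace ℝ (Fin l)),
      mulE (M + N) x = mulE M x + mulE N x := by
    intro k l M N x; simp [mulE]
  have hsmul : ∀ {k l : ℕ} (c : ℝ) (N : Matrix (Fin k) (Fin l) ℝ) (x : EuclideanSpace ℝ (Fin l)),
      mulE (c • N) x = c • mulE N x := by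
    intro k l c N x; simp [mulE]
  have hone : ∀ {k : ℕ} (x : EuclideanSpace ℝ (Fin k)), mulE 1 x = x := by
    intro k x; simp [mulE, Matrix.toLpLin_apply]
  have hvadd : ∀ {k l : ℕ} (M : Matrix (Fin k) (Fin l) ℝ) (x y : EuclideanSpace ℝ (Fin l)),
      mulE M (x + y) = mulE M x + mulE M y := by
    intro k l M x y; simp [mulE]
  have hdiff : mulE ((1 + γ • (Aᵀ * A)) * (Aᵀ * A) + γ • (Lᵀ * L)) w = mulE Aᵀ e := by
    have h1 : mulE (1 + γ • (Aᵀ * A)) (mulE Aᵀ d) = mulE Aᵀ e := by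
      rw [he, ← hmul, ← hmul]
      congr 1
      simp [Matrix.add_mul, Matrix.mul_add, Matrix.mul_assoc]
    rw [← h1]
    rw [hvadd, hu', hvadd, hvadd] at hu
    have h2 := sub_eq_zero.mpr hu
    rw [← sub_eq_zero, ← h2]
    abel
  have hexp : mulE ((1 + γ • (Aᵀ * A)) * (Aᵀ * A) + γ • (Lᵀ * L)) w
      = mulE Aᵀ (mulE A w) + γ • mulE Aᵀ (mulE A (mulE Aᵀ (mulE A w)))
        + γ • mulE Lᵀ (mulE L w) := by
    simp only [hadd, hmul, hsmul, hone]
  have hkey := congrArg (fun z => inner ℝ z w) (hexp.symm.trans hdiff)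
  simp only [inner_add_left, real_inner_smul_left, hinner] at hkey
  have hN : inner ℝ (mulE A (mulE Aᵀ (mulE A w))) (mulE A w)
      = ‖mulE Aᵀ (mulE A w)‖ ^ 2 := by
    rw [real_inner_comm, ← hinner, real_inner_self_eq_norm_sq]
  rw [hN, real_inner_self_eq_norm_sq, real_inner_self_eq_norm_sq] at hkey
  have hcs := real_inner_le_norm e (mulE A w)
  have hle : ‖mulE A w‖ ≤ ‖e‖ := by
    by_contra! hlt
    have h0 : 0 ≤ γ * ‖mulE Aᵀ (mulE A w)‖ ^ 2 := by positivity
    have h1 : 0 ≤ γ * ‖mulE L w‖ ^ 2 := by positivity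
    have h2 := norm_nonneg e
    nlinarith
  have hray : lmin * ‖w‖ ^ 2 ≤ ‖mulE A w‖ ^ 2 := by
    have h := hpsd.dotProduct_mulVec_nonneg w.ofLp
    have h2 : inner ℝ (mulE (Aᵀ * A - lmin • (1 : Matrix (Fin n) (Fin n) ℝ)) w) w
        = star w.ofLp ⬝ᵥ ((Aᵀ * A - lmin • (1 : Matrix (Fin n) (Fin n) ℝ)) *ᵥ w.ofLp) := by
      rfl
    rw [← h2, sub_eq_add_neg, ← neg_smul, hadd, hsmul, hone, hmul, inner_add_left,
      real_inner_smul_left, hinner, real_inner_self_eq_norm_sq, real_inner_self_eq_norm_sq] at h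
    linarith
  have hs : 0 < Real.sqrt lmin := Real.sqrt_pos.mpr hlminpos
  rw [one_div, ← div_eq_inv_mul, le_div_iff₀ hs]
  refine le_trans ?_ hle
  refine abs_le_of_sq_le_sq' ?_ (norm_nonneg _) |>.2
  rw [mul_pow, Real.sq_sqrt hlminpos.le]
  linarith
end

section
/- Let γ > 0, suppose u* ∈ ℝⁿ satisfies AᵀAu* = Aᵀb and Lu* = g, and let ũ_γ be a solution of the stabilized-regularized linear system ((I + γAᵀA)AᵀA + γLᵀL) u = (I + γAᵀA)Aᵀb̃ + γLᵀg with perturbed right-hand data b̃ ∈ ℝᵐ. Assume the corresponding system with unperturbed data b also admits a solution. Then ‖Au* − Aũ_γ‖ ≤ ‖(I + γAAᵀ)(b − b̃)‖. -/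
open scoped Matrix RealInnerProductSpace

theorem mulE_mul' {m n k : ℕ} (A : Matrix (Fin m) (Fin n) ℝ) (B : Matrix (Fin n) (Fin k) ℝ)
    (v : EuclideanSpace ℝ (Fin k)) : mulE (A * B) v = mulE A (mulE B v) := by
  ext i
  simp [mulE, Matrix.toLpLin_apply, Matrix.mulVec_mulVec]

theorem mulE_addM {m n : ℕ} (A B : Matrix (Fin m) (Fin n) ℝ)
    (v : EuclideanSpace ℝ (Fin n)) : mulE (A + B) v = mulE A v + mulE B v := by
  simp [mulE]

theorem mulE_smulM {m n : ℕ} (c : ℝ) (A : Matrix (Fin m) (Fin n) ℝ)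
    (v : EuclideanSpace ℝ (Fin n)) : mulE (c • A) v = c • mulE A v := by
  simp [mulE]

theorem mulE_oneM {n : ℕ} (v : EuclideanSpace ℝ (Fin n)) :
    mulE (1 : Matrix (Fin n) (Fin n) ℝ) v = v := by
  ext i
  simp [mulE, Matrix.toLpLin_apply]

theorem mulE_addV {m n : ℕ} (A : Matrix (Fin m) (Fin n) ℝ)
    (v w : EuclideanSpace ℝ (Fin n)) : mulE A (v + w) = mulE A v + mulE A w := by
  simp [mulE]

theorem mulE_subV {m n : ℕ} (A : Matrix (Fin m) (Fin n) ℝ)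
    (v w : EuclideanSpace ℝ (Fin n)) : mulE A (v - w) = mulE A v - mulE A w := by
  simp [mulE]

theorem mulE_smulV {m n : ℕ} (A : Matrix (Fin m) (Fin n) ℝ) (c : ℝ)
    (v : EuclideanSpace ℝ (Fin n)) : mulE A (c • v) = c • mulE A v := by
  simp [mulE]

theorem inner_mulE_transpose {m n : ℕ} (A : Matrix (Fin m) (Fin n) ℝ)
    (w : EuclideanSpace ℝ (Fin m)) (v : EuclideanSpace ℝ (Fin n)) :
    ⟪mulE Aᵀ w, v⟫ = ⟪w, mulE A v⟫ := by
  have h := Matrix.toEuclideanLin_conjTranspose_eq_adjoint A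
  rw [Matrix.conjTranspose_eq_transpose_of_trivial] at h
  rw [mulE, mulE, h, LinearMap.adjoint_inner_left]

/-- Let `γ > 0`, let `u⋆` satisfy `AᵀAu⋆ = Aᵀb` and `Lu⋆ = g`, and let `u'` solve the
stabilized-regularized system `((I + γAᵀA)AᵀA + γLᵀL) u = (I + γAᵀA)Aᵀb' + γLᵀg` with
perturbed data `b'`. If the corresponding system with unperturbed data `b` also admits a
solution, then `‖Au⋆ − Au'‖ ≤ ‖(I + γAAᵀ)(b − b')‖`. -/
theorem stmt12 {m n p : ℕ} (A : Matrix (Fin m) (Fin n) ℝ)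
    (b b' : EuclideanSpace ℝ (Fin m))
    (L : Matrix (Fin p) (Fin n) ℝ) (g : EuclideanSpace ℝ (Fin p))
    (γ : ℝ) (hγ : 0 < γ)
    (ustar : EuclideanSpace ℝ (Fin n))
    (hnormal : mulE Aᵀ (mulE A ustar) = mulE Aᵀ b)
    (hreg : mulE L ustar = g)
    (u' : EuclideanSpace ℝ (Fin n))
    (hu' : mulE ((1 + γ • (Aᵀ * A)) * (Aᵀ * A) + γ • (Lᵀ * L)) u'
        = mulE (1 + γ • (Aᵀ * A)) (mulE Aᵀ b') + γ • mulE Lᵀ g)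
    (hex : ∃ u : EuclideanSpace ℝ (Fin n),
      mulE ((1 + γ • (Aᵀ * A)) * (Aᵀ * A) + γ • (Lᵀ * L)) u
        = mulE (1 + γ • (Aᵀ * A)) (mulE Aᵀ b) + γ • mulE Lᵀ g) :
    ‖mulE A ustar - mulE A u'‖ ≤ ‖mulE (1 + γ • (A * Aᵀ)) (b - b')‖ := by
  rw [← mulE_subV]
  set e := ustar - u' with he
  set c := mulE (1 + γ • (A * Aᵀ)) (b - b') with hc
  have key : mulE Aᵀ (mulE A e) + γ • mulE Aᵀ (mulE A (mulE Aᵀ (mulE A e)))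
      + γ • mulE Lᵀ (mulE L e) = mulE Aᵀ c := by
    subst hreg
    simp only [mulE_mul', mulE_addM, mulE_smulM, mulE_oneM] at hu'
    simp only [he, hc, mulE_mul', mulE_addM, mulE_smulM, mulE_oneM, mulE_subV, mulE_addV,
      mulE_smulV, hnormal, smul_sub]
    rw [← sub_eq_zero] at hu' ⊢
    rw [← neg_eq_zero, ← hu']
    module
  have h2 := congrArg (fun x => ⟪x, e⟫) key
  simp only [inner_add_left, real_inner_smul_left, inner_mulE_transpose] at h2
  have h7 : ⟪mulE A (mulE Aᵀ (mulE A e)), mulE A e⟫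
      = ⟪mulE Aᵀ (mulE A e), mulE Aᵀ (mulE A e)⟫ := by
    rw [real_inner_comm, ← inner_mulE_transpose A]
  rw [h7] at h2
  simp only [real_inner_self_eq_norm_sq] at h2
  have h3 := real_inner_le_norm c (mulE A e)
  have h4 : 0 ≤ γ * ‖mulE Aᵀ (mulE A e)‖ ^ 2 := by positivity
  have h5 : 0 ≤ γ * ‖mulE L e‖ ^ 2 := by positivity
  by_contra! h
  have h6 : 0 ≤ ‖c‖ := norm_nonneg c
  nlinarith
end
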